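/- Let n ≥ 2 and let f : ℝⁿ → ℝ≥0 be (1/(n-1))-harmonic-concave with convex support K of diameter D. Then for any measurable partition ℝⁿ = S₁ ∪ S₂ ∪ S₃, π_f(S₃) ≥ (d(S₁,S₂)/D) · min{π_f(S₁), π_f(S₂)}. -/

import Mathlib

open Set MeasureTheory

/-!
If the inequality fails with `δ < d(S₁, S₂)` in place of `d(S₁, S₂)`, then the two integrals of
`δ f 1_{Sᵢ} - D f 1_{S₃}`, `i = 1, 2`, are positive on a ball. Repeatedly bisecting the first of
them by hyperplanes through a dense set of codimension-two subspaces, and keeping the half on which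
the second stays positive, produces convex sets `C` which shrink to a segment. On a late enough `C`
the projection to the direction `e` of that segment still keeps `S₁` and `S₂` at distance `δ`.

By a Borell–Brascamp–Lieb inequality, integrating the `1/(n-1)`-harmonic-concave function `f 1_C`
over the `(n-1)`-dimensional fibres of the projection gives a quasi-concave function on the line.
For a quasi-concave density each superlevel set is an interval, so if it meets both projections it
contains a gap of length `δ`; integrating over the levels proves the inequality for `f 1_C`, a
contradiction.
-/

section BrunnMinkowski
open scoped ENNReal NNReal Pointwise

-- Translated to touch at a single point, `A` and `B` both sit inside `A + B`.
lemma volume_add_volume_le_of_isCompact {A B : Set ℝ} (hA : IsCompact A) (hB : IsCompact B)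
    (hA₀ : A.Nonempty) (hB₀ : B.Nonempty) : volume A + volume B ≤ volume (A + B) := by
  obtain ⟨a, haA, ha⟩ := hA.exists_isGreatest hA₀
  obtain ⟨b, hbB, hb⟩ := hB.exists_isLeast hB₀
  have hinter : volume ((A + {b}) ∩ ({a} + B)) = 0 := by
    refine measure_mono_null (t := {a + b}) ?_ (by simp)
    simp only [add_singleton, singleton_add]
    rintro _ ⟨⟨x, hx, rfl⟩, ⟨y, hy, hxy⟩⟩
    have hxa : x ≤ a := ha hx
    have hby : b ≤ y := hb hy
    simp only [mem_singleton_iff] at hxy ⊢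
    linarith
  have hmeas : MeasurableSet ({a} + B) := (isCompact_singleton.add hB).measurableSet
  calc volume A + volume B = volume (A + {b}) + volume ({a} + B) := by simp
    _ = volume ((A + {b}) ∪ ({a} + B)) := by
        rw [← measure_union_add_inter _ hmeas, hinter, add_zero]
    _ ≤ volume (A + B) := measure_mono <| union_subset
        (add_subset_add_left (singleton_subset_iff.2 hbB))
        (add_subset_add_right (singleton_subset_iff.2 haA))

lemma volume_add_volume_le {A B : Set ℝ} (hA : MeasurableSet A) (hB : MeasurableSet B)
    (hA₀ : A.Nonempty) (hB₀ : B.Nonempty) : volume A + volume B ≤ volume (A + B) := by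
  obtain ⟨a, ha⟩ := hA₀
  obtain ⟨b, hb⟩ := hB₀
  rw [hA.measure_eq_iSup_isCompact, hB.measure_eq_iSup_isCompact]
  simp only [iSup_and']
  refine ENNReal.biSup_add_biSup_le' ⟨∅, by simp⟩ ⟨∅, by simp⟩ fun K ⟨hKA, hK⟩ L ⟨hLB, hL⟩ => ?_
  calc volume K + volume L ≤ volume (insert a K) + volume (insert b L) := by
        gcongr <;> exact subset_insert _ _
    _ ≤ volume (insert a K + insert b L) := volume_add_volume_le_of_isCompact (hK.insert a)
        (hL.insert b) (insert_nonempty _ _) (insert_nonempty _ _)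
    _ ≤ volume (A + B) := measure_mono <|
        add_subset_add (insert_subset ha hKA) (insert_subset hb hLB)

lemma mul_volume_add_mul_volume_le {A B : Set ℝ} (hA : MeasurableSet A) (hB : MeasurableSet B)
    (hA₀ : A.Nonempty) (hB₀ : B.Nonempty) (s t : ℝ≥0) :
    s * volume A + t * volume B ≤ volume (s • A + t • B) := by
  have hsmul (r : ℝ≥0) (S : Set ℝ) : r * volume S = volume (r • S) := by
    simp [NNReal.smul_def, Measure.addHaar_smul]
  rw [hsmul s A, hsmul t B]
  exact volume_add_volume_le (hA.const_smul₀ s) (hB.const_smul₀ t) hA₀.smul_set hB₀.smul_set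

lemma lintegral_eq_lintegral_measure_ofReal_lt {α : Type*} [MeasurableSpace α] (μ : Measure α)
    {u : α → ℝ≥0∞} (hu : AEMeasurable u μ) :
    ∫⁻ x, u x ∂μ = ∫⁻ r in Ioi (0 : ℝ), μ {x | ENNReal.ofReal r < u x} := by
  by_cases htop : μ {x | u x = ∞} = 0
  · have hfin : ∀ᵐ x ∂μ, u x ≠ ∞ := by simpa [ae_iff] using htop
    calc ∫⁻ x, u x ∂μ = ∫⁻ x, ENNReal.ofReal (u x).toReal ∂μ :=
          lintegral_congr_ae (hfin.mono fun x hx => (ENNReal.ofReal_toReal hx).symm)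
      _ = ∫⁻ r in Ioi (0 : ℝ), μ {x | r < (u x).toReal} :=
          lintegral_eq_lintegral_meas_lt μ (.of_forall fun _ => ENNReal.toReal_nonneg)
            hu.ennreal_toReal
      _ = ∫⁻ r in Ioi (0 : ℝ), μ {x | ENNReal.ofReal r < u x} := by
          refine setLIntegral_congr_fun measurableSet_Ioi fun r hr => measure_congr ?_
          filter_upwards [hfin] with x hx
          exact propext (ENNReal.ofReal_lt_iff_lt_toReal hr.le hx).symm
  · rw [lintegral_eq_top_of_measure_eq_top_ne_zero hu htop, eq_comm, eq_top_iff]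
    calc ∞ = ∫⁻ _ in Ioi (0 : ℝ), μ {x | u x = ∞} := by simp [ENNReal.mul_top htop]
      _ ≤ ∫⁻ r in Ioi (0 : ℝ), μ {x | ENNReal.ofReal r < u x} :=
          lintegral_mono fun r => measure_mono fun x (hx : u x = ∞) => by simp [hx]

lemma mul_lintegral_add_mul_lintegral_le {u v w : ℝ → ℝ≥0∞} (hu : Measurable u)
    (hv : Measurable v) (hw : Measurable w) (hsup : ⨆ x, u x = ⨆ y, v y) {s t : ℝ≥0}
    (h : ∀ x y, min (u x) (v y) ≤ w (s * x + t * y)) :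
    s * (∫⁻ x, u x) + t * (∫⁻ x, v x) ≤ ∫⁻ x, w x := by
  rw [lintegral_eq_lintegral_measure_ofReal_lt _ hu.aemeasurable,
    lintegral_eq_lintegral_measure_ofReal_lt _ hv.aemeasurable,
    lintegral_eq_lintegral_measure_ofReal_lt _ hw.aemeasurable,
    ← lintegral_const_mul' _ _ ENNReal.coe_ne_top, ← lintegral_const_mul' _ _ ENNReal.coe_ne_top]
  refine (le_lintegral_add _ _).trans (lintegral_mono fun r => ?_)
  rcases lt_or_ge (ENNReal.ofReal r) (⨆ x, u x) with hr | hr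
  · have hu_ne : {x | ENNReal.ofReal r < u x}.Nonempty := lt_iSup_iff.1 hr
    have hv_ne : {y | ENNReal.ofReal r < v y}.Nonempty := lt_iSup_iff.1 (hr.trans_eq hsup)
    refine (mul_volume_add_mul_volume_le (measurableSet_lt measurable_const hu)
      (measurableSet_lt measurable_const hv) hu_ne hv_ne s t).trans (measure_mono ?_)
    rintro _ ⟨_, ⟨x, hx, rfl⟩, _, ⟨y, hy, rfl⟩, rfl⟩
    exact (lt_min hx hy).trans_le (h x y)
  · have hu_empty : {x | ENNReal.ofReal r < u x} = ∅ :=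
      eq_empty_of_forall_notMem fun x => ((le_iSup u x).trans hr).not_gt
    have hv_empty : {x | ENNReal.ofReal r < v x} = ∅ :=
      eq_empty_of_forall_notMem fun x => ((le_iSup v x).trans (hsup ▸ hr)).not_gt
    simp [hu_empty, hv_empty]

end BrunnMinkowski

section HarmonicMean
open scoped ENNReal NNReal

lemma add_mul_pow_succ_le (k : ℕ) (x y a b : ℝ≥0) :
    (x * a + y * b) ^ (k + 1) ≤ (x + y) ^ k * (x * a ^ (k + 1) + y * b ^ (k + 1)) := by
  rcases eq_or_ne (x + y) 0 with hxy | hxy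
  · obtain ⟨rfl, rfl⟩ := add_eq_zero.1 hxy
    simp
  have hweights : x / (x + y) + y / (x + y) = 1 := by rw [← add_div, div_self hxy]
  have hjensen := NNReal.rpow_arith_mean_le_arith_mean2_rpow _ _ a b hweights
    (p := (k + 1 : ℕ)) (by simp)
  simp only [NNReal.rpow_natCast] at hjensen
  calc (x * a + y * b) ^ (k + 1)
      = (x + y) ^ (k + 1) * (x / (x + y) * a + y / (x + y) * b) ^ (k + 1) := by
        rw [← mul_pow]
        congr 1
        field_simp
    _ ≤ (x + y) ^ (k + 1) * (x / (x + y) * a ^ (k + 1) + y / (x + y) * b ^ (k + 1)) := by gcongr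
    _ = (x + y) ^ k * (x * a ^ (k + 1) + y * b ^ (k + 1)) := by
        field_simp
        ring

lemma min_mul_add_pow_succ_le (k : ℕ) (s t p q y z : ℝ≥0) (a b : ℝ≥0∞) :
    min (a * (p : ℝ≥0∞) ^ k) (b * (q : ℝ≥0∞) ^ k) *
        ((s * (p * y) + t * (q * z) : ℝ≥0) : ℝ≥0∞) ^ (k + 1) ≤
      ((s * p + t * q : ℝ≥0) : ℝ≥0∞) ^ k *
        (s * (a * ((p * y : ℝ≥0) : ℝ≥0∞) ^ (k + 1)) +
          t * (b * ((q * z : ℝ≥0) : ℝ≥0∞) ^ (k + 1))) := by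
  set c := min (a * (p : ℝ≥0∞) ^ k) (b * (q : ℝ≥0∞) ^ k)
  have hpow : ((s * (p * y) + t * (q * z) : ℝ≥0) : ℝ≥0∞) ^ (k + 1) ≤
      ((s * p + t * q : ℝ≥0) : ℝ≥0∞) ^ k *
        (s * p * (y : ℝ≥0∞) ^ (k + 1) + t * q * (z : ℝ≥0∞) ^ (k + 1)) := by
    have := add_mul_pow_succ_le k (s * p) (t * q) y z
    rw [mul_assoc, mul_assoc] at this
    exact_mod_cast this
  calc c * ((s * (p * y) + t * (q * z) : ℝ≥0) : ℝ≥0∞) ^ (k + 1)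
      ≤ c * (((s * p + t * q : ℝ≥0) : ℝ≥0∞) ^ k *
          (s * p * (y : ℝ≥0∞) ^ (k + 1) + t * q * (z : ℝ≥0∞) ^ (k + 1))) := by gcongr
    _ = ((s * p + t * q : ℝ≥0) : ℝ≥0∞) ^ k *
          (s * (c * (p * (y : ℝ≥0∞) ^ (k + 1))) + t * (c * (q * (z : ℝ≥0∞) ^ (k + 1)))) := by ring
    _ ≤ ((s * p + t * q : ℝ≥0) : ℝ≥0∞) ^ k *
          (s * (a * (p : ℝ≥0∞) ^ k * (p * (y : ℝ≥0∞) ^ (k + 1))) +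
            t * (b * (q : ℝ≥0∞) ^ k * (q * (z : ℝ≥0∞) ^ (k + 1)))) := by
        gcongr
        exacts [min_le_left _ _, min_le_right _ _]
    _ = _ := by
        push_cast
        ring

lemma exists_pos_iSup_mul_pow_eq_one {α : Type*} {u : α → ℝ≥0∞} (h₀ : ⨆ x, u x ≠ 0)
    (htop : ⨆ x, u x ≠ ∞) {p : ℝ≥0} (hp : 0 < p) {k : ℕ} (hk : k ≠ 0) :
    ∃ z : ℝ≥0, 0 < z ∧ ⨆ x, u x * ((p * z : ℝ≥0) : ℝ≥0∞) ^ k = 1 := by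
  lift ⨆ x, u x to ℝ≥0 using htop with M hM
  have hM₀ : M ≠ 0 := by simpa using h₀
  refine ⟨M⁻¹ ^ (k : ℝ)⁻¹ / p, div_pos (NNReal.rpow_pos (by positivity)) hp, ?_⟩
  rw [← ENNReal.iSup_mul, ← hM, mul_div_cancel₀ _ hp.ne', ← ENNReal.coe_pow,
    NNReal.rpow_inv_natCast_pow _ hk, ← ENNReal.coe_mul, mul_inv_cancel₀ hM₀, ENNReal.coe_one]

lemma iSup_lintegral_min_natCast {α : Type*} [MeasurableSpace α] {μ : Measure α} {u : α → ℝ≥0∞}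
    (hu : Measurable u) : ⨆ N : ℕ, ∫⁻ x, min (u x) N ∂μ = ∫⁻ x, u x ∂μ := by
  rw [← lintegral_iSup (fun N => hu.min measurable_const)
    fun N M hNM x => min_le_min_left _ (by exact_mod_cast hNM)]
  simp [← inf_iSup_eq, ENNReal.iSup_natCast]

lemma measurePreserving_consEquivL (m : ℕ) :
    MeasurePreserving (Fin.consEquivL ℝ fun _ : Fin (m + 1) => ℝ) := by
  convert (volume_preserving_piFinSuccAbove (fun _ : Fin (m + 1) => ℝ) 0).symm using 1
  ext z i
  refine Fin.cases ?_ (fun j => ?_) i <;> simp [MeasurableEquiv.piFinSuccAbove]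

lemma lintegral_fin_cons {m : ℕ} {u : (Fin (m + 1) → ℝ) → ℝ≥0∞} (hu : Measurable u) :
    ∫⁻ x, u x = ∫⁻ y : Fin m → ℝ, ∫⁻ r : ℝ, u (Fin.cons r y) := by
  have hcons := measurePreserving_consEquivL m
  rw [← hcons.lintegral_comp hu, Measure.volume_eq_prod]
  exact lintegral_prod_symm' _ (hu.comp hcons.measurable)

/-- `HarmonicMeanLE k s t a b w` says that the weighted harmonic mean of exponent `1 / k`,
`(s * a ^ (-1 / k) + t * b ^ (-1 / k)) ^ (-k)`, is at most `w`. It is written as a homogeneous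
family of inequalities, so that the values `0` and `∞` need no convention; for `k = 0` and
`0 < s, t` it reads `min a b ≤ w`. -/
def HarmonicMeanLE (k : ℕ) (s t : ℝ≥0) (a b w : ℝ≥0∞) : Prop :=
  ∀ p q : ℝ≥0, 0 < p → 0 < q →
    min (a * (p : ℝ≥0∞) ^ k) (b * (q : ℝ≥0∞) ^ k) ≤ w * ((s * p + t * q : ℝ≥0) : ℝ≥0∞) ^ k

namespace HarmonicMeanLE

variable {k : ℕ} {s t : ℝ≥0}

lemma min_le {a b w : ℝ≥0∞} (h : HarmonicMeanLE 0 s t a b w) : min a b ≤ w := by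
  simpa using h 1 1 one_pos one_pos

lemma mono {a b a' b' w : ℝ≥0∞} (h : HarmonicMeanLE k s t a b w) (ha : a' ≤ a) (hb : b' ≤ b) :
    HarmonicMeanLE k s t a' b' w := fun p q hp hq =>
  (min_le_min (by gcongr) (by gcongr)).trans (h p q hp hq)

lemma zero_left (b w : ℝ≥0∞) : HarmonicMeanLE k s t 0 b w := fun p q _ _ => by simp

lemma zero_right (a w : ℝ≥0∞) : HarmonicMeanLE k s t a 0 w := fun p q _ _ => by simp

-- Rescaling `u` and `v` to have supremum `1` reduces this to the case of equal suprema; the powers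
-- of the scaling factors are recombined by the power mean inequality.
lemma lintegral_of_iSup_ne_top {u v w : ℝ → ℝ≥0∞} (hu : Measurable u) (hv : Measurable v)
    (hw : Measurable w) (hs : 0 < s) (ht : 0 < t) (hutop : ⨆ x, u x ≠ ∞) (hvtop : ⨆ x, v x ≠ ∞)
    (h : ∀ x y, HarmonicMeanLE (k + 1) s t (u x) (v y) (w (s * x + t * y))) :
    HarmonicMeanLE k s t (∫⁻ x, u x) (∫⁻ x, v x) (∫⁻ x, w x) := by
  rcases eq_or_ne (⨆ x, u x) 0 with hu₀ | hu₀
  · simpa [ENNReal.iSup_eq_zero.1 hu₀] using zero_left _ _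
  rcases eq_or_ne (⨆ x, v x) 0 with hv₀ | hv₀
  · simpa [ENNReal.iSup_eq_zero.1 hv₀] using zero_right _ _
  intro p q hp hq
  obtain ⟨y, hy, hu_sup⟩ := exists_pos_iSup_mul_pow_eq_one hu₀ hutop hp k.succ_ne_zero
  obtain ⟨z, hz, hv_sup⟩ := exists_pos_iSup_mul_pow_eq_one hv₀ hvtop hq k.succ_ne_zero
  set X : ℝ≥0 := s * (p * y) + t * (q * z)
  have hbm : s * (∫⁻ x, u x * ((p * y : ℝ≥0) : ℝ≥0∞) ^ (k + 1)) +
      t * (∫⁻ x, v x * ((q * z : ℝ≥0) : ℝ≥0∞) ^ (k + 1)) ≤ ∫⁻ x, w x * (X : ℝ≥0∞) ^ (k + 1) :=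
    mul_lintegral_add_mul_lintegral_le (hu.mul_const _) (hv.mul_const _) (hw.mul_const _)
      (hu_sup.trans hv_sup.symm) fun a b => h a b _ _ (by positivity) (by positivity)
  rw [lintegral_mul_const _ hu, lintegral_mul_const _ hv, lintegral_mul_const _ hw] at hbm
  have hX₀ : (X : ℝ≥0∞) ^ (k + 1) ≠ 0 := by
    have : 0 < X := by positivity
    simp [this.ne']
  rw [← ENNReal.mul_le_mul_iff_left hX₀ (by finiteness)]
  calc min ((∫⁻ x, u x) * (p : ℝ≥0∞) ^ k) ((∫⁻ x, v x) * (q : ℝ≥0∞) ^ k) * (X : ℝ≥0∞) ^ (k + 1)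
      ≤ ((s * p + t * q : ℝ≥0) : ℝ≥0∞) ^ k *
          (s * ((∫⁻ x, u x) * ((p * y : ℝ≥0) : ℝ≥0∞) ^ (k + 1)) +
            t * ((∫⁻ x, v x) * ((q * z : ℝ≥0) : ℝ≥0∞) ^ (k + 1))) :=
        min_mul_add_pow_succ_le k s t p q y z _ _
    _ ≤ ((s * p + t * q : ℝ≥0) : ℝ≥0∞) ^ k * ((∫⁻ x, w x) * (X : ℝ≥0∞) ^ (k + 1)) := by gcongr
    _ = (∫⁻ x, w x) * ((s * p + t * q : ℝ≥0) : ℝ≥0∞) ^ k * (X : ℝ≥0∞) ^ (k + 1) := by ring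

theorem lintegral {u v w : ℝ → ℝ≥0∞} (hu : Measurable u) (hv : Measurable v)
    (hw : Measurable w) (hs : 0 < s) (ht : 0 < t)
    (h : ∀ x y, HarmonicMeanLE (k + 1) s t (u x) (v y) (w (s * x + t * y))) :
    HarmonicMeanLE k s t (∫⁻ x, u x) (∫⁻ x, v x) (∫⁻ x, w x) := by
  intro p q hp hq
  have hmono (u : ℝ → ℝ≥0∞) (r : ℝ≥0∞) : Monotone fun N : ℕ => (∫⁻ x, min (u x) N) * r :=
    fun N M hNM => by
      dsimp only
      gcongr
  have hsup (u : ℝ → ℝ≥0∞) (N : ℕ) : ⨆ x, min (u x) N ≠ ∞ :=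
    ne_top_of_le_ne_top (ENNReal.natCast_ne_top N) (iSup_le fun _ => min_le_right _ _)
  rw [← iSup_lintegral_min_natCast hu, ← iSup_lintegral_min_natCast hv, ENNReal.iSup_mul,
    ENNReal.iSup_mul, ← iSup_inf_of_monotone (hmono u _) (hmono v _)]
  exact iSup_le fun N => lintegral_of_iSup_ne_top (hu.min measurable_const)
    (hv.min measurable_const) hw hs ht (hsup u N) (hsup v N)
    (fun x y => (h x y).mono (min_le_left _ _) (min_le_left _ _)) p q hp hq

theorem lintegral_pi {m : ℕ} {u v w : (Fin m → ℝ) → ℝ≥0∞} (hu : Measurable u) (hv : Measurable v)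
    (hw : Measurable w) (hs : 0 < s) (ht : 0 < t)
    (h : ∀ x y, HarmonicMeanLE (k + m) s t (u x) (v y) (w ((s : ℝ) • x + (t : ℝ) • y))) :
    HarmonicMeanLE k s t (∫⁻ x, u x) (∫⁻ x, v x) (∫⁻ x, w x) := by
  induction m with
  | zero =>
    simp only [volume_pi, Measure.pi_of_empty _ (0 : Fin 0 → ℝ), lintegral_dirac]
    simpa only [add_zero, Subsingleton.elim _ (0 : Fin 0 → ℝ)] using h 0 0
  | succ m ih =>
    have hcons : Measurable fun z : (Fin m → ℝ) × ℝ => (Fin.cons z.2 z.1 : Fin (m + 1) → ℝ) :=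
      (measurePreserving_consEquivL m).measurable.comp measurable_swap
    have hcons' (x : Fin m → ℝ) : Measurable fun r : ℝ => (Fin.cons r x : Fin (m + 1) → ℝ) :=
      hcons.comp measurable_prodMk_left
    rw [lintegral_fin_cons hu, lintegral_fin_cons hv, lintegral_fin_cons hw]
    refine ih (hu.comp hcons).lintegral_prod_right' (hv.comp hcons).lintegral_prod_right'
      (hw.comp hcons).lintegral_prod_right' fun x y => ?_
    refine lintegral (hu.comp (hcons' x)) (hv.comp (hcons' y)) (hw.comp (hcons' _)) hs ht
      fun a b => ?_
    have hcomb : (Fin.cons (s * a + t * b) ((s : ℝ) • x + (t : ℝ) • y) : Fin (m + 1) → ℝ) =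
        (s : ℝ) • Fin.cons a x + (t : ℝ) • Fin.cons b y := by
      ext i
      refine Fin.cases ?_ (fun j => ?_) i <;> simp
    simpa only [Function.comp_apply, hcomb, add_assoc] using h (Fin.cons a x) (Fin.cons b y)

end HarmonicMeanLE
end HarmonicMean

section HarmonicConcave
open scoped ENNReal NNReal

lemma harmonicMeanLE_inv_pow {k : ℕ} {s t a b w : ℝ≥0} (ha : 0 < a) (hb : 0 < b) (hw : 0 < w)
    (h : w ≤ s * a + t * b) :
    HarmonicMeanLE k s t ((a⁻¹ ^ k : ℝ≥0) : ℝ≥0∞) ((b⁻¹ ^ k : ℝ≥0) : ℝ≥0∞)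
      ((w⁻¹ ^ k : ℝ≥0) : ℝ≥0∞) := by
  intro p q _ _
  have hmin : min (a⁻¹ * p) (b⁻¹ * q) ≤ w⁻¹ * (s * p + t * q) := by
    rw [le_inv_mul_iff₀ hw]
    calc w * min (a⁻¹ * p) (b⁻¹ * q) ≤ (s * a + t * b) * min (a⁻¹ * p) (b⁻¹ * q) := by gcongr
      _ = s * a * min (a⁻¹ * p) (b⁻¹ * q) + t * b * min (a⁻¹ * p) (b⁻¹ * q) := add_mul _ _ _
      _ ≤ s * a * (a⁻¹ * p) + t * b * (b⁻¹ * q) := by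
          gcongr
          exacts [min_le_left _ _, min_le_right _ _]
      _ = s * p + t * q := by field_simp
  simp only [← ENNReal.coe_pow, ← ENNReal.coe_mul, ← mul_pow]
  rw [← ENNReal.coe_min, ← (pow_left_mono k).map_min]
  exact_mod_cast pow_le_pow_left' hmin k

/-- A function is `(1 / k)`-harmonic-concave if its value at a convex combination dominates the
weighted harmonic mean of exponent `1 / k` of its values at the two points. With values in `ℝ≥0∞`,
extending a function by zero outside a convex set costs no side condition. -/
def HarmonicConcave {E : Type*} [AddCommMonoid E] [Module ℝ E] (k : ℕ) (g : E → ℝ≥0∞) : Prop :=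
  ∀ s t : ℝ≥0, 0 < s → 0 < t → s + t = 1 → ∀ x y,
    HarmonicMeanLE k s t (g x) (g y) (g ((s : ℝ) • x + (t : ℝ) • y))

section Module

variable {E F : Type*} [AddCommGroup E] [Module ℝ E] [AddCommGroup F] [Module ℝ F] {k m : ℕ}

lemma harmonicConcave_indicator_of_convexOn_rpow (hk : k ≠ 0) {K : Set E} {f : E → ℝ}
    (hf : ∀ x ∈ K, 0 < f x) (h : ConvexOn ℝ K fun x => f x ^ (-(1 / (k : ℝ)))) :
    HarmonicConcave k (K.indicator fun x => ENNReal.ofReal (f x)) := by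
  intro s t _ _ hst x y
  by_cases hx : x ∈ K; swap
  · simpa [hx] using HarmonicMeanLE.zero_left _ _
  by_cases hy : y ∈ K; swap
  · simpa [hy] using HarmonicMeanLE.zero_right _ _
  have hst' : (s : ℝ) + t = 1 := by exact_mod_cast hst
  have hz : (s : ℝ) • x + (t : ℝ) • y ∈ K := h.1 hx hy s.2 t.2 hst'
  set φ : E → ℝ≥0 := fun x => (f x ^ (-(1 / (k : ℝ)))).toNNReal with hφ
  have hφ_pos {x} (hx : x ∈ K) : 0 < φ x := Real.toNNReal_pos.2 (Real.rpow_pos_of_pos (hf x hx) _)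
  have hφ_inv {x} (hx : x ∈ K) : ENNReal.ofReal (f x) = ((φ x)⁻¹ ^ k : ℝ≥0) := by
    rw [ENNReal.ofReal, ENNReal.coe_inj, hφ, ← Real.toNNReal_inv, Real.rpow_neg (hf x hx).le,
      inv_inv, ← Real.toNNReal_pow (Real.rpow_nonneg (hf x hx).le _), one_div,
      Real.rpow_inv_natCast_pow (hf x hx).le hk]
  have hφ_conv : φ ((s : ℝ) • x + (t : ℝ) • y) ≤ s * φ x + t * φ y := by
    rw [← NNReal.coe_le_coe]
    simpa [hφ, Real.rpow_nonneg (hf _ _).le, *] using h.2 hx hy s.2 t.2 hst'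
  simp only [indicator_of_mem, hx, hy, hz, hφ_inv]
  exact harmonicMeanLE_inv_pow (hφ_pos hx) (hφ_pos hy) (hφ_pos hz) hφ_conv

namespace HarmonicConcave

lemma indicator {g : E → ℝ≥0∞} (hg : HarmonicConcave k g) {C : Set E} (hC : Convex ℝ C) :
    HarmonicConcave k (C.indicator g) := by
  intro s t hs ht hst x y
  by_cases hx : x ∈ C; swap
  · simpa [hx] using HarmonicMeanLE.zero_left _ _
  by_cases hy : y ∈ C; swap
  · simpa [hy] using HarmonicMeanLE.zero_right _ _
  have hz : (s : ℝ) • x + (t : ℝ) • y ∈ C := hC hx hy s.2 t.2 (by exact_mod_cast hst)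
  simpa only [indicator_of_mem, hx, hy, hz] using hg s t hs ht hst x y

lemma comp_linearMap {g : E → ℝ≥0∞} (hg : HarmonicConcave k g) (Φ : F →ₗ[ℝ] E) :
    HarmonicConcave k (g ∘ Φ) := by
  intro s t hs ht hst x y
  simpa using hg s t hs ht hst (Φ x) (Φ y)

theorem quasiconcaveOn_lintegral {g : F × (Fin m → ℝ) → ℝ≥0∞} (hg : HarmonicConcave m g)
    (hmeas : ∀ x, Measurable fun y => g (x, y)) :
    QuasiconcaveOn ℝ univ fun x => ∫⁻ y, g (x, y) := by
  refine quasiconcaveOn_iff_min_le.2 ⟨convex_univ, fun a _ b _ s t hs ht hst => ?_⟩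
  rcases hs.eq_or_lt with rfl | hs
  · simp [show t = 1 by linarith]
  rcases ht.eq_or_lt with rfl | ht
  · simp [show s = 1 by linarith]
  lift s to ℝ≥0 using hs.le
  lift t to ℝ≥0 using ht.le
  norm_cast at hs ht hst
  refine HarmonicMeanLE.min_le (HarmonicMeanLE.lintegral_pi (hmeas a) (hmeas b) (hmeas _) hs ht
    fun x y => ?_)
  simpa using hg s t hs ht hst (a, x) (b, y)

end HarmonicConcave
end Module
end HarmonicConcave

section LineIsoperimetry
open scoped ENNReal

lemma ofReal_le_volume_compl_inter {Q₁ Q₂ I : Set ℝ} (hQ₁ : IsClosed Q₁) (hQ₂ : IsClosed Q₂)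
    (hI : I.OrdConnected) {δ : ℝ} (hsep : ∀ x ∈ Q₁, ∀ y ∈ Q₂, δ ≤ dist x y)
    (h₁ : (I ∩ Q₁).Nonempty) (h₂ : (I ∩ Q₂).Nonempty) :
    ENNReal.ofReal δ ≤ volume (I ∩ (Q₁ ∪ Q₂)ᶜ) := by
  obtain ⟨a, haI, haQ⟩ := h₁
  obtain ⟨b, hbI, hbQ⟩ := h₂
  wlog hab : a ≤ b generalizing Q₁ Q₂ a b
  · rw [union_comm]
    exact this hQ₂ hQ₁ (fun x hx y hy => dist_comm x y ▸ hsep y hy x hx) b hbI hbQ a haI haQ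
      (le_of_not_ge hab)
  obtain ⟨x, ⟨hxQ, hax, hxb⟩, hx⟩ :=
    (isCompact_Icc.inter_left hQ₁).exists_isGreatest ⟨a, haQ, left_mem_Icc.2 hab⟩
  obtain ⟨y, ⟨hyQ, hxy, hyb⟩, hy⟩ :=
    (isCompact_Icc.inter_left hQ₂).exists_isLeast ⟨b, hbQ, right_mem_Icc.2 hxb⟩
  have hgap : Ioo x y ⊆ I ∩ (Q₁ ∪ Q₂)ᶜ := by
    intro z ⟨hxz, hzy⟩
    refine ⟨hI.out haI hbI ⟨hax.trans hxz.le, hzy.le.trans hyb⟩, ?_⟩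
    rintro (hzQ | hzQ)
    · exact hxz.not_ge (hx ⟨hzQ, hax.trans hxz.le, hzy.le.trans hyb⟩)
    · exact hzy.not_ge (hy ⟨hzQ, hxz.le, hzy.le.trans hyb⟩)
  calc ENNReal.ofReal δ ≤ ENNReal.ofReal (y - x) := by
        gcongr
        exact (hsep x hxQ y hyQ).trans_eq <| by
          rw [dist_comm, Real.dist_eq, abs_of_nonneg (sub_nonneg.2 hxy)]
    _ = volume (Ioo x y) := by simp
    _ ≤ volume (I ∩ (Q₁ ∪ Q₂)ᶜ) := measure_mono hgap

theorem ofReal_mul_min_setLIntegral_le_of_quasiconcaveOn {A : ℝ → ℝ≥0∞} (hA : Measurable A)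
    (hqc : QuasiconcaveOn ℝ univ A) {Q₁ Q₂ : Set ℝ} (hQ₁ : IsClosed Q₁) (hQ₂ : IsClosed Q₂)
    {δ : ℝ} (hsep : ∀ x ∈ Q₁, ∀ y ∈ Q₂, δ ≤ dist x y) :
    ENNReal.ofReal δ * min (∫⁻ x in Q₁, A x) (∫⁻ x in Q₂, A x) ≤
      volume A.support * ∫⁻ x in (Q₁ ∪ Q₂)ᶜ, A x := by
  wlog hsup : ⨆ x ∈ Q₁, A x ≤ ⨆ x ∈ Q₂, A x generalizing Q₁ Q₂
  · rw [union_comm, min_comm]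
    exact this hQ₂ hQ₁ (fun x hx y hy => dist_comm x y ▸ hsep y hy x hx) (le_of_not_ge hsup)
  have hlevel (r : ℝ) : MeasurableSet {x | ENNReal.ofReal r < A x} :=
    measurableSet_lt measurable_const hA
  have hanti : Antitone fun r => volume.restrict (Q₁ ∪ Q₂)ᶜ {x | ENNReal.ofReal r < A x} :=
    fun r r' hr => measure_mono fun x => (ENNReal.ofReal_le_ofReal hr).trans_lt
  refine (mul_le_mul_right (min_le_left _ _) _).trans ?_
  rw [lintegral_eq_lintegral_measure_ofReal_lt _ hA.aemeasurable,
    lintegral_eq_lintegral_measure_ofReal_lt _ hA.aemeasurable,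
    ← lintegral_const_mul _ hanti.measurable]
  refine (lintegral_const_mul_le _ _).trans (lintegral_mono fun r => ?_)
  dsimp only
  rw [Measure.restrict_apply (hlevel r), Measure.restrict_apply (hlevel r)]
  rcases ({x | ENNReal.ofReal r < A x} ∩ Q₁).eq_empty_or_nonempty with hempty | hmeet₁
  · simp [hempty]
  have hmeet₂ : ({x | ENNReal.ofReal r < A x} ∩ Q₂).Nonempty := by
    obtain ⟨x, hx, hxQ⟩ := hmeet₁
    obtain ⟨y, hyQ, hy⟩ := lt_biSup_iff.1 ((lt_biSup_iff.2 ⟨x, hxQ, hx⟩).trans_le hsup)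
    exact ⟨y, hy, hyQ⟩
  have hord : {x | ENNReal.ofReal r < A x}.OrdConnected := by
    simpa using (hqc.convex_gt (ENNReal.ofReal r)).ordConnected
  rw [mul_comm]
  gcongr
  · exact fun x hx => (bot_le.trans_lt hx.1).ne'
  · exact ofReal_le_volume_compl_inter hQ₁ hQ₂ hord hsep hmeet₁ hmeet₂

end LineIsoperimetry

section Needle
open scoped ENNReal NNReal
open Module Function

lemma setLIntegral_mono_of_inter_support_subset {α : Type*} [MeasurableSpace α] {μ : Measure α}
    {g : α → ℝ≥0∞} (hg : Measurable g) {S T : Set α} (h : S ∩ support g ⊆ T) :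
    ∫⁻ x in S, g x ∂μ ≤ ∫⁻ x in T, g x ∂μ := by
  calc ∫⁻ x in S, g x ∂μ = ∫⁻ x in S, (support g).indicator g x ∂μ := by rw [indicator_support]
    _ = ∫⁻ x in support g ∩ S, g x ∂μ := setLIntegral_indicator (measurableSet_support hg) g
    _ ≤ ∫⁻ x in T, g x ∂μ := lintegral_mono_set (inter_comm S _ ▸ h)

lemma le_dist_of_mem_closure {X : Type*} [PseudoMetricSpace X] {S T : Set X} {δ : ℝ}
    (h : ∀ x ∈ S, ∀ y ∈ T, δ ≤ dist x y) : ∀ x ∈ closure S, ∀ y ∈ closure T, δ ≤ dist x y :=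
  fun _ hx _ hy => isClosed_Ici.closure_subset (s := Ici δ) <|
    map_mem_closure₂ continuous_dist hx hy h

variable {E : Type*} [NormedAddCommGroup E] [InnerProductSpace ℝ E] [FiniteDimensional ℝ E]
  [MeasurableSpace E] [BorelSpace E] {m : ℕ}

lemma exists_measurePreserving_inner_eq_fst (hE : finrank ℝ E = m + 1) {e : E} (he : ‖e‖ = 1) :
    ∃ Φ : ℝ × (Fin m → ℝ) →ₗ[ℝ] E, MeasurePreserving Φ ∧ ∀ z, inner ℝ e (Φ z) = z.1 := by
  have hunit : Orthonormal ℝ (({0} : Set (Fin (m + 1))).domRestrict fun _ => e) :=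
    ⟨fun _ => he, fun i j hij => absurd (Subsingleton.elim i j) hij⟩
  obtain ⟨b, hb⟩ := hunit.exists_orthonormalBasis_extension_of_card_eq (by simpa using hE)
  have hb₀ : b 0 = e := hb 0 rfl
  refine ⟨b.repr.symm.toLinearMap ∘ₗ (WithLp.linearEquiv 2 ℝ (Fin (m + 1) → ℝ)).symm.toLinearMap ∘ₗ
    (Fin.consEquivL ℝ fun _ : Fin (m + 1) => ℝ).toLinearMap, ?_, fun z => ?_⟩
  · exact b.repr.symm.measurePreserving.comp
      ((PiLp.volume_preserving_toLp (Fin (m + 1))).comp (measurePreserving_consEquivL m))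
  · simp [← hb₀, ← OrthonormalBasis.repr_apply_apply]

namespace HarmonicConcave

variable {g : E → ℝ≥0∞} {e : E}

lemma exists_quasiconcaveOn_marginal (hE : finrank ℝ E = m + 1) (hg : HarmonicConcave m g)
    (hmeas : Measurable g) (he : ‖e‖ = 1) :
    ∃ A : ℝ → ℝ≥0∞, Measurable A ∧ QuasiconcaveOn ℝ univ A ∧ support A ⊆ inner ℝ e '' support g ∧
      ∀ Q, MeasurableSet Q → ∫⁻ r in Q, A r = ∫⁻ x in inner ℝ e ⁻¹' Q, g x := by
  obtain ⟨Φ, hΦ, hΦe⟩ := exists_measurePreserving_inner_eq_fst hE he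
  have hgΦ : Measurable (g ∘ Φ) := hmeas.comp hΦ.measurable
  refine ⟨fun r => ∫⁻ y, g (Φ (r, y)), hgΦ.lintegral_prod_right',
    (hg.comp_linearMap Φ).quasiconcaveOn_lintegral fun x => hgΦ.comp measurable_prodMk_left, ?_, ?_⟩
  · refine support_subset_iff'.2 fun r hr => ?_
    have hzero (y) : g (Φ (r, y)) = 0 := by
      by_contra hne
      exact hr ⟨_, hne, hΦe _⟩
    simp [hzero]
  · intro Q hQ
    have hpre : MeasurableSet (inner ℝ e ⁻¹' Q : Set E) := (innerSL ℝ e).continuous.measurable hQ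
    have hpreΦ : Φ ⁻¹' (inner ℝ e ⁻¹' Q) = Q ×ˢ univ := by
      ext z
      simp [hΦe]
    rw [← hΦ.setLIntegral_comp_preimage hpre hmeas, hpreΦ, Measure.volume_eq_prod]
    simpa only [Measure.restrict_univ, comp_apply] using
      (setLIntegral_prod (μ := volume) (ν := volume) (s := Q) (t := univ) (g ∘ Φ)
        hgΦ.aemeasurable).symm

theorem ofReal_mul_min_setLIntegral_le_of_inner_separated (hE : finrank ℝ E = m + 1)
    (hg : HarmonicConcave m g) (hmeas : Measurable g) (he : ‖e‖ = 1) {S₁ S₂ : Set E} {δ : ℝ}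
    (hsep : ∀ x ∈ S₁ ∩ support g, ∀ y ∈ S₂ ∩ support g, δ ≤ dist (inner ℝ e x) (inner ℝ e y)) :
    ENNReal.ofReal δ * min (∫⁻ x in S₁, g x) (∫⁻ x in S₂, g x) ≤
      Metric.ediam (support g) * ∫⁻ x in (S₁ ∪ S₂)ᶜ, g x := by
  obtain ⟨A, hA, hqc, hsupp, hslice⟩ := hg.exists_quasiconcaveOn_marginal hE hmeas he
  set Q : Set E → Set ℝ := fun S => closure (inner ℝ e '' (S ∩ support g))
  have hQ_closed (S) : IsClosed (Q S) := isClosed_closure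
  have hQ_sep : ∀ x ∈ Q S₁, ∀ y ∈ Q S₂, δ ≤ dist x y :=
    le_dist_of_mem_closure (by simpa only [forall_mem_image] using hsep)
  have hQ_mem {S : Set E} : S ∩ support g ⊆ inner ℝ e ⁻¹' Q S :=
    fun x hx => subset_closure (mem_image_of_mem _ hx)
  have hlip : LipschitzWith 1 (inner ℝ e) := by
    have hnorm : ‖innerSL ℝ e‖₊ = 1 := NNReal.eq (by simpa using he)
    exact hnorm ▸ (innerSL ℝ e).lipschitz
  have hdiam : volume (support A) ≤ Metric.ediam (support g) :=
    calc volume (support A) ≤ volume (inner ℝ e '' support g) := measure_mono hsupp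
      _ ≤ Metric.ediam (inner ℝ e '' support g) := Real.volume_le_diam _
      _ ≤ Metric.ediam (support g) := by simpa using hlip.ediam_image_le (support g)
  calc ENNReal.ofReal δ * min (∫⁻ x in S₁, g x) (∫⁻ x in S₂, g x)
      ≤ ENNReal.ofReal δ * min (∫⁻ r in Q S₁, A r) (∫⁻ r in Q S₂, A r) := by
        rw [hslice _ (hQ_closed S₁).measurableSet, hslice _ (hQ_closed S₂).measurableSet]
        gcongr ENNReal.ofReal δ * min ?_ ?_ <;>
          exact setLIntegral_mono_of_inter_support_subset hmeas hQ_mem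
    _ ≤ volume (support A) * ∫⁻ r in (Q S₁ ∪ Q S₂)ᶜ, A r :=
        ofReal_mul_min_setLIntegral_le_of_quasiconcaveOn hA hqc (hQ_closed S₁) (hQ_closed S₂) hQ_sep
    _ ≤ Metric.ediam (support g) * ∫⁻ x in (S₁ ∪ S₂)ᶜ, g x := by
        rw [hslice _ ((hQ_closed S₁).union (hQ_closed S₂)).measurableSet.compl]
        refine mul_le_mul' hdiam (setLIntegral_mono_of_inter_support_subset hmeas ?_)
        rintro x ⟨hx, hgx⟩ (hxS | hxS)
        exacts [hx (.inl (hQ_mem ⟨hxS, hgx⟩)), hx (.inr (hQ_mem ⟨hxS, hgx⟩))]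

end HarmonicConcave
end Needle

section Localization
open Module Function Filter Topology

section HalfSpaces
variable {α : Type*} [MeasurableSpace α] {ν : Measure α} {u : α → ℝ}

lemma setIntegral_ge_add_setIntegral_le {h : α → ℝ} (hh : Measurable h) {c : ℝ}
    (hc : ∀ᵐ x ∂ν, h x ≠ c) (hu : Integrable u ν) :
    ∫ x in {x | c ≤ h x}, u x ∂ν + ∫ x in {x | h x ≤ c}, u x ∂ν = ∫ x, u x ∂ν := by
  have hcompl : {x | h x ≤ c} =ᵐ[ν] ({x | c ≤ h x}ᶜ : Set α) := by
    filter_upwards [hc] with x hx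
    exact propext ((le_iff_lt_or_eq.trans (or_iff_left hx)).trans not_le.symm)
  rw [setIntegral_congr_set hcompl, integral_add_compl (measurableSet_le measurable_const hh) hu]

lemma continuous_setIntegral_nonneg {X : Type*} [TopologicalSpace X] [FirstCountableTopology X]
    {h : X → α → ℝ} (hmeas : ∀ θ, Measurable (h θ)) (hcont : ∀ x, Continuous fun θ => h θ x)
    (hne : ∀ θ, ∀ᵐ x ∂ν, h θ x ≠ 0) (hu : Integrable u ν) :
    Continuous fun θ => ∫ x in {x | 0 ≤ h θ x}, u x ∂ν := by
  have hset (θ) : MeasurableSet {x | 0 ≤ h θ x} := measurableSet_le measurable_const (hmeas θ)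
  simp only [← integral_indicator (hset _)]
  refine continuous_iff_continuousAt.2 fun θ => continuousAt_of_dominated
    (.of_forall fun θ' => (hu.indicator (hset θ')).aestronglyMeasurable)
    (.of_forall fun θ' => .of_forall fun x => norm_indicator_le_norm_self _ _) hu.norm ?_
  filter_upwards [hne θ] with x hx
  rcases hx.lt_or_gt with hneg | hpos
  · refine continuousAt_const.congr (f := fun _ => 0) ?_
    filter_upwards [(hcont x).continuousAt.eventually_lt continuousAt_const hneg] with θ' hθ'
    exact (indicator_of_notMem (s := {x | 0 ≤ h θ' x}) (not_le.2 hθ') u).symm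
  · refine continuousAt_const.congr (f := fun _ => u x) ?_
    filter_upwards [continuousAt_const.eventually_lt (hcont x).continuousAt hpos] with θ' hθ'
    exact (indicator_of_mem (s := {x | 0 ≤ h θ' x}) hθ'.le u).symm

-- Rotating a line through `p` by `π` exchanges its two sides.
lemma exists_setIntegral_halfPlane_eq_half {T : α → ℝ × ℝ} (hT : Measurable T) {p : ℝ × ℝ}
    (hne : ∀ L : ℝ × ℝ →L[ℝ] ℝ, L ≠ 0 → ∀ᵐ x ∂ν, L (T x) ≠ L p) (hu : Integrable u ν) :
    ∃ L : ℝ × ℝ →L[ℝ] ℝ, L ≠ 0 ∧ ∫ x in {x | L p ≤ L (T x)}, u x ∂ν = (∫ x, u x ∂ν) / 2 := by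
  let L (θ : ℝ) : ℝ × ℝ →L[ℝ] ℝ :=
    Real.cos θ • ContinuousLinearMap.fst ℝ ℝ ℝ + Real.sin θ • ContinuousLinearMap.snd ℝ ℝ ℝ
  have hL (θ) : L θ ≠ 0 := fun h => by
    have hcos : Real.cos θ = 0 := by simpa [L] using DFunLike.congr_fun h (1, 0)
    have hsin : Real.sin θ = 0 := by simpa [L] using DFunLike.congr_fun h (0, 1)
    simpa [hcos, hsin] using Real.cos_sq_add_sin_sq θ
  let G (θ : ℝ) : ℝ := ∫ x in {x | L θ p ≤ L θ (T x)}, u x ∂ν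
  have hG : Continuous G := by
    simpa only [sub_nonneg] using continuous_setIntegral_nonneg (h := fun θ x => L θ (T x) - L θ p)
      (fun θ => by fun_prop) (fun x => by simp only [L]; fun_prop)
      (fun θ => by simpa only [sub_ne_zero] using hne _ (hL θ)) hu
  have hGπ : G 0 + G Real.pi = ∫ x, u x ∂ν := by
    simpa [G, L] using setIntegral_ge_add_setIntegral_le (by fun_prop) (hne _ (hL 0)) hu
  have hhalf : (∫ x, u x ∂ν) / 2 ∈ uIcc (G 0) (G Real.pi) := by
    rw [← hGπ, mem_uIcc]
    rcases le_total (G 0) (G Real.pi) with h | h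
    · exact .inl ⟨by linarith, by linarith⟩
    · exact .inr ⟨by linarith, by linarith⟩
  obtain ⟨θ, -, hθ⟩ := intermediate_value_uIcc hG.continuousOn hhalf
  exact ⟨L θ, hL θ, hθ⟩

end HalfSpaces

section Cut
variable {E : Type*} [NormedAddCommGroup E] [NormedSpace ℝ E] [FiniteDimensional ℝ E]
  [MeasurableSpace E] [BorelSpace E] {μ : Measure E} {u₁ u₂ : E → ℝ}

lemma ae_apply_ne [μ.IsAddHaarMeasure] {ℓ : E →L[ℝ] ℝ} (hℓ : ℓ ≠ 0) (c : ℝ) :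
    ∀ᵐ x ∂μ, ℓ x ≠ c := by
  set H : AffineSubspace ℝ E := (AffineSubspace.mk' c ⊥).comap ℓ.toLinearMap.toAffineMap
  have hmem (x) : x ∈ H ↔ ℓ x = c := by simp [H, sub_eq_zero]
  have hH : H ≠ ⊤ := fun htop => hℓ <| by
    have hconst (x) : ℓ x = c := (hmem x).1 (htop ▸ trivial)
    ext x
    simpa [map_zero] using (hconst x).trans (hconst 0).symm
  rw [ae_iff]
  convert μ.addHaar_affineSubspace H hH using 2
  ext x
  simp [hmem]

/-- A closed convex set on which both `u₁` and `u₂` have positive integral: the sets which the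
bisection procedure of the localization lemma shrinks. -/
structure PositiveBody (μ : Measure E) (u₁ u₂ : E → ℝ) (C : Set E) : Prop where
  isClosed : IsClosed C
  convex : Convex ℝ C
  integral_pos_left : 0 < ∫ x in C, u₁ x ∂μ
  integral_pos_right : 0 < ∫ x in C, u₂ x ∂μ

lemma PositiveBody.exists_subset_halfSpace [μ.IsAddHaarMeasure] {C : Set E}
    (hC : PositiveBody μ u₁ u₂ C)
    (hu₁ : Integrable u₁ μ) (hu₂ : Integrable u₂ μ) {T : E →L[ℝ] ℝ × ℝ} (hT : Surjective T)
    (p : ℝ × ℝ) : ∃ C' ⊆ C, PositiveBody μ u₁ u₂ C' ∧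
      ∃ L : ℝ × ℝ →L[ℝ] ℝ, L ≠ 0 ∧ ∀ z ∈ T '' C', L p ≤ L z := by
  have hline (L : ℝ × ℝ →L[ℝ] ℝ) (hL : L ≠ 0) : ∀ᵐ x ∂μ.restrict C, L (T x) ≠ L p :=
    ae_restrict_of_ae <| ae_apply_ne (ℓ := L.comp T)
      (fun h => hL <| ContinuousLinearMap.ext fun z => by
        obtain ⟨x, rfl⟩ := hT z
        exact DFunLike.congr_fun h x) _
  let H (L : ℝ × ℝ →L[ℝ] ℝ) : Set E := {x | L p ≤ L (T x)}
  have hH (L) : IsClosed (H L) := isClosed_le continuous_const (by fun_prop)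
  have hH_convex (L) : Convex ℝ (H L) := convex_halfSpace_ge (L.comp T).isLinear _
  have hH_neg (L) : H (-L) = {x | L (T x) ≤ L p} := by simp [H]
  have hsplit {u : E → ℝ} (hu : Integrable u μ) {L} (hL : L ≠ 0) :
      ∫ x in H L, u x ∂μ.restrict C + ∫ x in H (-L), u x ∂μ.restrict C = ∫ x in C, u x ∂μ := by
    rw [hH_neg]
    exact setIntegral_ge_add_setIntegral_le (by fun_prop) (hline L hL) hu.restrict
  have hcut {L} (hL : L ≠ 0) (h₁ : 0 < ∫ x in H L, u₁ x ∂μ.restrict C)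
      (h₂ : 0 < ∫ x in H L, u₂ x ∂μ.restrict C) : ∃ C' ⊆ C, PositiveBody μ u₁ u₂ C' ∧
        ∃ L : ℝ × ℝ →L[ℝ] ℝ, L ≠ 0 ∧ ∀ z ∈ T '' C', L p ≤ L z := by
    rw [Measure.restrict_restrict (hH L).measurableSet] at h₁ h₂
    exact ⟨H L ∩ C, inter_subset_right, ⟨(hH L).inter hC.isClosed,
      (hH_convex L).inter hC.convex, h₁, h₂⟩, L, hL, forall_mem_image.2 fun x hx => hx.1⟩
  obtain ⟨L, hL, hhalf⟩ := exists_setIntegral_halfPlane_eq_half T.continuous.measurable hline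
    hu₁.restrict
  change ∫ x in H L, u₁ x ∂μ.restrict C = _ at hhalf
  have hsplit₁ := hsplit hu₁ hL
  have hsplit₂ := hsplit hu₂ hL
  have hpos₁ := hC.integral_pos_left
  have hpos₂ := hC.integral_pos_right
  by_cases h₂ : 0 < ∫ x in H L, u₂ x ∂μ.restrict C
  · exact hcut hL (by linarith) h₂
  · exact hcut (neg_ne_zero.2 hL) (by linarith) (by linarith)

end Cut

lemma exists_antitone_forall_exists_mem {α ι : Type*} [Preorder α] [Countable ι] {Q : ι → Set α}
    (hQ : ∀ i a, ∃ b ≤ a, b ∈ Q i) (a₀ : α) :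
    ∃ a : ℕ → α, Antitone a ∧ a 0 = a₀ ∧ ∀ i, ∃ k, a k ∈ Q i := by
  have := Encodable.ofCountable ι
  let 𝒟 (i : ι) : Order.Cofinal αᵒᵈ :=
    ⟨OrderDual.ofDual ⁻¹' Q i, fun a => (hQ i (OrderDual.ofDual a)).imp fun _ h => h.symm⟩
  exact ⟨OrderDual.ofDual ∘ Order.sequenceOfCofinals (OrderDual.toDual a₀) 𝒟,
    Order.sequenceOfCofinals.monotone _ 𝒟, rfl, fun i =>
      ⟨_, Order.sequenceOfCofinals.encode_mem _ 𝒟 i⟩⟩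

section Collinear

lemma surjective_coord_prod_coord {𝕜 ι V : Type*} [Field 𝕜] [AddCommGroup V] [Module 𝕜 V]
    (b : Basis ι 𝕜 V) {i j : ι} (hij : i ≠ j) : Surjective ((b.coord i).prod (b.coord j)) :=
  fun z => ⟨z.1 • b i + z.2 • b j, by ext <;> simp [hij, hij.symm]⟩

lemma interior_eq_empty_of_dense_supporting {F ι : Type*} [NormedAddCommGroup F] [NormedSpace ℝ F]
    {B : Set F} {p : ι → F} (hp : DenseRange p)
    (h : ∀ i, ∃ L : F →L[ℝ] ℝ, L ≠ 0 ∧ ∀ z ∈ B, L (p i) ≤ L z) : interior B = ∅ := by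
  by_contra hne
  obtain ⟨i, hi⟩ := hp.exists_mem_open isOpen_interior (nonempty_iff_ne_empty.2 hne)
  obtain ⟨L, hL, hmin⟩ := h i
  have hlocal : IsLocalMin L (p i) := by
    filter_upwards [mem_interior_iff_mem_nhds.1 hi] with z hz using hmin z hz
  exact hL (L.fderiv ▸ hlocal.fderiv_eq_zero)

lemma collinear_of_interior_eq_empty {F : Type*} [NormedAddCommGroup F] [NormedSpace ℝ F]
    [FiniteDimensional ℝ F] (hF : finrank ℝ F ≤ 2) {B : Set F} (hB : Convex ℝ B)
    (hint : interior B = ∅) : Collinear ℝ B := by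
  rcases B.eq_empty_or_nonempty with rfl | hne
  · exact collinear_empty ℝ F
  have hspan : vectorSpan ℝ B ≠ ⊤ := fun htop => by
    rw [← AffineSubspace.affineSpan_eq_top_iff_vectorSpan_eq_top_of_nonempty ℝ F F hne,
      ← hB.interior_nonempty_iff_affineSpan_eq_top, hint] at htop
    exact not_nonempty_empty htop
  rw [collinear_iff_finrank_le_one]
  exact Nat.le_of_lt_succ ((Submodule.finrank_lt hspan).trans_le hF)

lemma sub_mul_sub_eq_of_collinear {𝕜 : Type*} [Field 𝕜] {B : Set (𝕜 × 𝕜)} (hB : Collinear 𝕜 B)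
    {x y z : 𝕜 × 𝕜} (hx : x ∈ B) (hy : y ∈ B) (hz : z ∈ B) :
    (y.1 - x.1) * (z.2 - x.2) = (y.2 - x.2) * (z.1 - x.1) := by
  obtain ⟨v, hv⟩ := (collinear_iff_of_mem hx).1 hB
  obtain ⟨r, rfl⟩ := hv y hy
  obtain ⟨s, rfl⟩ := hv z hz
  simp only [vadd_eq_add, Prod.fst_add, Prod.snd_add, Prod.smul_fst, Prod.smul_snd, smul_eq_mul]
  ring

lemma collinear_of_coord_pairs {𝕜 ι V : Type*} [Field 𝕜] [AddCommGroup V] [Module 𝕜 V]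
    (b : Basis ι 𝕜 V) {C : Set V}
    (h : ∀ i j, i ≠ j → Collinear 𝕜 ((b.coord i).prod (b.coord j) '' C)) : Collinear 𝕜 C := by
  rcases C.subsingleton_or_nontrivial with hsub | ⟨x, hx, y, hy, hxy⟩
  · exact hsub.induction_on (collinear_empty 𝕜 V) (collinear_singleton 𝕜)
  obtain ⟨i, hi⟩ : ∃ i, b.coord i (y - x) ≠ 0 := by
    by_contra! hzero
    exact hxy (sub_eq_zero.1 (b.forall_coord_eq_zero_iff.1 hzero)).symm
  refine (collinear_iff_of_mem hx).2
    ⟨y - x, fun z hz => ⟨b.coord i (z - x) / b.coord i (y - x), ?_⟩⟩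
  have hminor (j) : b.coord i (y - x) * b.coord j (z - x) =
      b.coord j (y - x) * b.coord i (z - x) := by
    rcases eq_or_ne i j with rfl | hij
    · rfl
    · simpa only [map_sub, LinearMap.prod_apply, prod_apply] using
        sub_mul_sub_eq_of_collinear (h i j hij) (mem_image_of_mem _ hx) (mem_image_of_mem _ hy)
          (mem_image_of_mem _ hz)
  rw [vadd_eq_add, ← sub_eq_iff_eq_add]
  refine b.ext_elem fun j => ?_
  change b.coord j (z - x) = b.coord j (_ • (y - x))
  rw [map_smul, smul_eq_mul, div_mul_eq_mul_div, eq_div_iff hi]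
  linear_combination hminor j

lemma exists_norm_eq_one_dist_inner_eq {E : Type*} [NormedAddCommGroup E] [InnerProductSpace ℝ E]
    [Nontrivial E] {C : Set E} (hC : Collinear ℝ C) :
    ∃ e : E, ‖e‖ = 1 ∧ ∀ x ∈ C, ∀ y ∈ C, dist (inner ℝ e x) (inner ℝ e y) = dist x y := by
  obtain ⟨o, v, hv⟩ := (collinear_iff_exists_forall_eq_smul_vadd C).1 hC
  obtain ⟨e, he, hev⟩ : ∃ e : E, ‖e‖ = 1 ∧ v = ‖v‖ • e := by
    rcases eq_or_ne v 0 with rfl | hv₀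
    · exact (exists_norm_eq E zero_le_one).imp fun e he => ⟨he, by simp⟩
    · exact ⟨‖v‖⁻¹ • v, by simp [norm_smul, hv₀], by simp [smul_smul, hv₀]⟩
  refine ⟨e, he, fun x hx y hy => ?_⟩
  obtain ⟨r, rfl⟩ := hv x hx
  obtain ⟨s, rfl⟩ := hv y hy
  rw [hev]
  simp [dist_eq_norm, ← sub_smul, inner_add_right, inner_smul_right, norm_smul, he, ← sub_mul]

end Collinear

section AlmostCollinear

lemma PositiveBody.exists_antitone_collinear_iInter {E : Type*} [NormedAddCommGroup E]
    [NormedSpace ℝ E] [FiniteDimensional ℝ E] [MeasurableSpace E] [BorelSpace E] {μ : Measure E}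
    [μ.IsAddHaarMeasure] {u₁ u₂ : E → ℝ} {C₀ : Set E} (hC₀ : PositiveBody μ u₁ u₂ C₀)
    (hu₁ : Integrable u₁ μ) (hu₂ : Integrable u₂ μ) :
    ∃ C : ℕ → Set E, Antitone C ∧ C 0 = C₀ ∧ (∀ k, PositiveBody μ u₁ u₂ (C k)) ∧
      Collinear ℝ (⋂ k, C k) := by
  let b := finBasis ℝ E
  let T (i j) : E →L[ℝ] ℝ × ℝ := ((b.coord i).prod (b.coord j)).toContinuousLinearMap
  let p := TopologicalSpace.denseSeq (ℝ × ℝ)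
  obtain ⟨C, hanti, hzero, hcut⟩ := exists_antitone_forall_exists_mem
    (α := {C : Set E // PositiveBody μ u₁ u₂ C})
    (Q := fun c : {ij : Fin (finrank ℝ E) × Fin (finrank ℝ E) // ij.1 ≠ ij.2} × ℕ =>
      {C | ∃ L : ℝ × ℝ →L[ℝ] ℝ, L ≠ 0 ∧ ∀ z ∈ T c.1.1.1 c.1.1.2 '' C.1, L (p c.2) ≤ L z})
    (fun ⟨⟨ij, hij⟩, k⟩ C => by
      obtain ⟨C', hsub, hC', hL⟩ := C.2.exists_subset_halfSpace hu₁ hu₂ (T := T ij.1 ij.2)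
        (surjective_coord_prod_coord b hij) (p k)
      exact ⟨⟨C', hC'⟩, hsub, hL⟩)
    ⟨C₀, hC₀⟩
  refine ⟨fun k => (C k).1, hanti, congrArg Subtype.val hzero, fun k => (C k).2,
    collinear_of_coord_pairs b fun i j hij => collinear_of_interior_eq_empty (by simp) ?_ <|
      interior_eq_empty_of_dense_supporting (TopologicalSpace.denseRange_denseSeq _) fun k => ?_⟩
  · exact (convex_iInter fun k => (C k).2.convex).linear_image _
  · obtain ⟨l, L, hL, hmin⟩ := hcut (⟨(i, j), hij⟩, k)
    exact ⟨L, hL, fun z hz => hmin z (image_mono (iInter_subset _ l) hz)⟩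

lemma exists_forall_lt_dist_of_iInter {X Y : Type*} [MetricSpace X] [PseudoMetricSpace Y]
    {C : ℕ → Set X} (hanti : Antitone C) (hcomp : ∀ k, IsCompact (C k)) {φ : X → Y}
    (hφ : Continuous φ) (hdist : ∀ x ∈ ⋂ k, C k, ∀ y ∈ ⋂ k, C k, dist (φ x) (φ y) = dist x y)
    {δ d : ℝ} (hδ : δ < d) :
    ∃ k, ∀ x ∈ C k, ∀ y ∈ C k, d ≤ dist x y → δ < dist (φ x) (φ y) := by
  by_contra! hcon
  let B : Set (X × X) := {z | d ≤ dist z.1 z.2 ∧ dist (φ z.1) (φ z.2) ≤ δ}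
  have hB : IsClosed B := (isClosed_le continuous_const continuous_dist).inter
    (isClosed_le ((hφ.comp continuous_fst).dist (hφ.comp continuous_snd)) continuous_const)
  have hclosed (k) : IsClosed (C k ×ˢ C k ∩ B) :=
    ((hcomp k).isClosed.prod (hcomp k).isClosed).inter hB
  obtain ⟨⟨x, y⟩, hxy⟩ := IsCompact.nonempty_iInter_of_sequence_nonempty_isCompact_isClosed
    (fun k => C k ×ˢ C k ∩ B)
    (fun k => inter_subset_inter_left _ (prod_mono (hanti k.le_succ) (hanti k.le_succ)))
    (fun k => by
      obtain ⟨x, hx, y, hy, hd, hle⟩ := hcon k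
      exact ⟨(x, y), ⟨hx, hy⟩, hd, hle⟩)
    (((hcomp 0).prod (hcomp 0)).inter_right hB) hclosed
  rw [mem_iInter] at hxy
  have heq := hdist x (mem_iInter.2 fun k => (hxy k).1.1) y (mem_iInter.2 fun k => (hxy k).1.2)
  exact hδ.not_ge ((hxy 0).2.1.trans (heq ▸ (hxy 0).2.2))

theorem PositiveBody.exists_almost_collinear {E : Type*} [NormedAddCommGroup E]
    [InnerProductSpace ℝ E] [FiniteDimensional ℝ E] [Nontrivial E] [MeasurableSpace E]
    [BorelSpace E] {μ : Measure E} [μ.IsAddHaarMeasure] {u₁ u₂ : E → ℝ} {C₀ : Set E}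
    (hC₀ : PositiveBody μ u₁ u₂ C₀) (hcomp : IsCompact C₀) (hu₁ : Integrable u₁ μ)
    (hu₂ : Integrable u₂ μ) {δ d : ℝ} (hδ : δ < d) :
    ∃ C, PositiveBody μ u₁ u₂ C ∧ ∃ e : E, ‖e‖ = 1 ∧
      ∀ x ∈ C, ∀ y ∈ C, d ≤ dist x y → δ < dist (inner ℝ e x) (inner ℝ e y) := by
  obtain ⟨C, hanti, rfl, hC, hcol⟩ := hC₀.exists_antitone_collinear_iInter hu₁ hu₂
  obtain ⟨e, he, hdist⟩ := exists_norm_eq_one_dist_inner_eq hcol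
  obtain ⟨k, hk⟩ := exists_forall_lt_dist_of_iInter hanti
    (fun k => hcomp.of_isClosed_subset (hC k).isClosed (hanti k.zero_le))
    (innerSL ℝ e).continuous hdist hδ
  exact ⟨C k, hC k, e, he, hk⟩

end AlmostCollinear
end Localization

section Isoperimetry
open scoped ENNReal
open Module Function

section SignedDensity

variable {α : Type*} [MeasurableSpace α] {ν : Measure α}

lemma integral_toReal_sub_toReal_pos_iff {a b : α → ℝ≥0∞} (ha : AEMeasurable a ν)
    (hb : AEMeasurable b ν) (ha' : ∫⁻ x, a x ∂ν ≠ ∞) (hb' : ∫⁻ x, b x ∂ν ≠ ∞) :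
    0 < ∫ x, ((a x).toReal - (b x).toReal) ∂ν ↔ ∫⁻ x, b x ∂ν < ∫⁻ x, a x ∂ν := by
  rw [integral_sub (integrable_toReal_of_lintegral_ne_top ha ha')
      (integrable_toReal_of_lintegral_ne_top hb hb'), integral_toReal ha (ae_lt_top' ha ha'),
    integral_toReal hb (ae_lt_top' hb hb'), sub_pos, ENNReal.toReal_lt_toReal hb' ha']

/-- The density `c • g` on `S` minus the density `D • g` on `T`, as a real function. Its integral
over `C` is positive exactly when the `C`-part of `g` violates `c • g(S) ≤ D • g(T)`, which turns a
violated isoperimetric inequality into data for the localization lemma. -/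
noncomputable def signedDensity (g : α → ℝ≥0∞) (c D : ℝ≥0∞) (S T : Set α) (x : α) : ℝ :=
  (c * S.indicator g x).toReal - (D * T.indicator g x).toReal

variable {g : α → ℝ≥0∞} {c D : ℝ≥0∞} {C S T : Set α}

lemma lintegral_const_mul_indicator_ne_top (hfin : ∫⁻ x, g x ∂ν ≠ ∞) (hc : c ≠ ∞) (S : Set α) :
    ∫⁻ x, c * S.indicator g x ∂ν ≠ ∞ := by
  rw [lintegral_const_mul' _ _ hc]
  exact ENNReal.mul_ne_top hc (ne_top_of_le_ne_top hfin (lintegral_mono (indicator_le_self S g)))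

lemma setLIntegral_const_mul_indicator (hg : Measurable g) (hS : MeasurableSet S)
    (hC : MeasurableSet C) :
    ∫⁻ x in C, c * S.indicator g x ∂ν = c * ∫⁻ x in S, C.indicator g x ∂ν := by
  rw [lintegral_const_mul _ (hg.indicator hS), setLIntegral_indicator hS,
    setLIntegral_indicator hC, inter_comm]

lemma integrable_signedDensity (hg : Measurable g) (hfin : ∫⁻ x, g x ∂ν ≠ ∞) (hc : c ≠ ∞)
    (hD : D ≠ ∞) (hS : MeasurableSet S) (hT : MeasurableSet T) :
    Integrable (signedDensity g c D S T) ν :=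
  (integrable_toReal_of_lintegral_ne_top ((hg.indicator hS).const_mul c).aemeasurable
    (lintegral_const_mul_indicator_ne_top hfin hc S)).sub
  (integrable_toReal_of_lintegral_ne_top ((hg.indicator hT).const_mul D).aemeasurable
    (lintegral_const_mul_indicator_ne_top hfin hD T))

lemma setIntegral_signedDensity_pos_iff (hg : Measurable g) (hfin : ∫⁻ x, g x ∂ν ≠ ∞)
    (hc : c ≠ ∞) (hD : D ≠ ∞) (hS : MeasurableSet S) (hT : MeasurableSet T)
    (hC : MeasurableSet C) :
    0 < ∫ x in C, signedDensity g c D S T x ∂ν ↔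
      D * ∫⁻ x in T, C.indicator g x ∂ν < c * ∫⁻ x in S, C.indicator g x ∂ν := by
  have hfinC : ∫⁻ x in C, g x ∂ν ≠ ∞ := ne_top_of_le_ne_top hfin (setLIntegral_le_lintegral _ _)
  rw [← setLIntegral_const_mul_indicator hg hS hC, ← setLIntegral_const_mul_indicator hg hT hC]
  exact integral_toReal_sub_toReal_pos_iff ((hg.indicator hS).const_mul c).aemeasurable
    ((hg.indicator hT).const_mul D).aemeasurable
    (lintegral_const_mul_indicator_ne_top hfinC hc S)
    (lintegral_const_mul_indicator_ne_top hfinC hD T)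

end SignedDensity

variable {E : Type*} [NormedAddCommGroup E] [InnerProductSpace ℝ E] [FiniteDimensional ℝ E]
  [MeasurableSpace E] [BorelSpace E]

namespace HarmonicConcave

variable {m : ℕ} {g : E → ℝ≥0∞} {S₁ S₂ : Set E} {δ d : ℝ}

lemma ofReal_mul_min_setLIntegral_le_of_lt (hE : finrank ℝ E = m + 1) (hg : HarmonicConcave m g)
    (hmeas : Measurable g) (hfin : ∫⁻ x, g x ≠ ∞) (hbdd : Bornology.IsBounded (support g))
    (hS₁ : MeasurableSet S₁) (hS₂ : MeasurableSet S₂) (hsep : ∀ x ∈ S₁, ∀ y ∈ S₂, d ≤ dist x y)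
    (hδ : δ < d) :
    ENNReal.ofReal δ * min (∫⁻ x in S₁, g x) (∫⁻ x in S₂, g x) ≤
      Metric.ediam (support g) * ∫⁻ x in (S₁ ∪ S₂)ᶜ, g x := by
  have : Nontrivial E := nontrivial_of_finrank_pos (R := ℝ) (hE ▸ m.succ_pos)
  set D := Metric.ediam (support g)
  have hD : D ≠ ∞ := Metric.isBounded_iff_ediam_ne_top.1 hbdd
  have hS₃ : MeasurableSet (S₁ ∪ S₂)ᶜ := (hS₁.union hS₂).compl
  set S₃ := (S₁ ∪ S₂)ᶜ
  let u (S : Set E) : E → ℝ := signedDensity g (ENNReal.ofReal δ) D S S₃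
  have hu {S} (hS : MeasurableSet S) : Integrable (u S) :=
    integrable_signedDensity hmeas hfin ENNReal.ofReal_ne_top hD hS hS₃
  have hu_pos {S C} (hS : MeasurableSet S) (hC : MeasurableSet C) : 0 < ∫ x in C, u S x ↔
      D * ∫⁻ x in S₃, C.indicator g x < ENNReal.ofReal δ * ∫⁻ x in S, C.indicator g x :=
    setIntegral_signedDensity_pos_iff hmeas hfin ENNReal.ofReal_ne_top hD hS hS₃ hC
  by_contra! hcon
  rw [mul_min, lt_min_iff] at hcon
  obtain ⟨R, hR⟩ := hbdd.subset_closedBall 0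
  have hball : (Metric.closedBall 0 R).indicator g = g := indicator_eq_self.2 hR
  have hC₀ : PositiveBody volume (u S₁) (u S₂) (Metric.closedBall 0 R) :=
    ⟨Metric.isClosed_closedBall, convex_closedBall 0 R,
      (hu_pos hS₁ measurableSet_closedBall).2 (hball.symm ▸ hcon.1),
      (hu_pos hS₂ measurableSet_closedBall).2 (hball.symm ▸ hcon.2)⟩
  obtain ⟨C, hC, e, he, hCsep⟩ :=
    hC₀.exists_almost_collinear (isCompact_closedBall 0 R) (hu hS₁) (hu hS₂) hδ
  have hCmeas := hC.isClosed.measurableSet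
  have hsupp : support (C.indicator g) = C ∩ support g := support_indicator
  have hneedle := (hg.indicator hC.convex).ofReal_mul_min_setLIntegral_le_of_inner_separated hE
    (hmeas.indicator hCmeas) he (S₁ := S₁) (S₂ := S₂) (δ := δ) fun x hx y hy =>
      (hCsep x (hsupp ▸ hx.2).1 y (hsupp ▸ hy.2).1 (hsep x hx.1 y hy.1)).le
  refine hneedle.not_gt ?_
  calc Metric.ediam (support (C.indicator g)) * ∫⁻ x in S₃, C.indicator g x
      ≤ D * ∫⁻ x in S₃, C.indicator g x := by
        gcongr
        exact Metric.ediam_mono (hsupp ▸ inter_subset_right)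
    _ < ENNReal.ofReal δ * min (∫⁻ x in S₁, C.indicator g x) (∫⁻ x in S₂, C.indicator g x) := by
        rw [mul_min, lt_min_iff, ← hu_pos hS₁ hCmeas, ← hu_pos hS₂ hCmeas]
        exact ⟨hC.integral_pos_left, hC.integral_pos_right⟩

theorem ofReal_mul_min_setLIntegral_le (hE : finrank ℝ E = m + 1) (hg : HarmonicConcave m g)
    (hmeas : Measurable g) (hfin : ∫⁻ x, g x ≠ ∞) (hbdd : Bornology.IsBounded (support g))
    (hS₁ : MeasurableSet S₁) (hS₂ : MeasurableSet S₂)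
    (hsep : ∀ x ∈ S₁, ∀ y ∈ S₂, d ≤ dist x y) :
    ENNReal.ofReal d * min (∫⁻ x in S₁, g x) (∫⁻ x in S₂, g x) ≤
      Metric.ediam (support g) * ∫⁻ x in (S₁ ∪ S₂)ᶜ, g x := by
  refine ENNReal.mul_le_of_forall_lt fun c hc b hb => ?_
  have hδ : c.toReal < d := ENNReal.toReal_lt_of_lt_ofReal hc
  calc c * b ≤ ENNReal.ofReal c.toReal * min (∫⁻ x in S₁, g x) (∫⁻ x in S₂, g x) := by
        rw [ENNReal.ofReal_toReal hc.ne_top]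
        gcongr
    _ ≤ _ := hg.ofReal_mul_min_setLIntegral_le_of_lt hE hmeas hfin hbdd hS₁ hS₂ hsep hδ

end HarmonicConcave

section Real

lemma continuousOn_interior_of_convexOn_rpow {V : Type*} [NormedAddCommGroup V] [NormedSpace ℝ V]
    [FiniteDimensional ℝ V] {f : V → ℝ} {K : Set V} {r : ℝ} (hr : r ≠ 0)
    (hpos : ∀ x ∈ K, 0 < f x) (h : ConvexOn ℝ K fun x => f x ^ r) :
    ContinuousOn f (interior K) := by
  have hf {x} (hx : x ∈ interior K) : 0 < f x := hpos x (interior_subset hx)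
  refine (h.continuousOn_interior.rpow_const (p := r⁻¹) fun x hx =>
    .inl (Real.rpow_pos_of_pos (hf hx) r).ne').congr fun x hx => ?_
  exact (Real.rpow_rpow_inv (hf hx).le hr).symm

lemma indicator_interior_ae_eq {V β : Type*} [NormedAddCommGroup V] [NormedSpace ℝ V]
    [FiniteDimensional ℝ V] [MeasurableSpace V] [BorelSpace V] (μ : Measure V)
    [μ.IsAddHaarMeasure] [Zero β] {K : Set V} (hK : Convex ℝ K) {f : V → β}
    (hzero : ∀ x ∉ K, f x = 0) : (interior K).indicator f =ᵐ[μ] f := by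
  filter_upwards [measure_eq_zero_iff_ae_notMem.1 (hK.addHaar_frontier μ)] with x hx
  exact indicator_apply_eq_self.2 fun hxint => hzero x fun hxK => hx ⟨subset_closure hxK, hxint⟩

theorem mul_min_setIntegral_le_of_convexOn_rpow {k : ℕ} (hk : k ≠ 0) (hE : finrank ℝ E = k + 1)
    {f : E → ℝ} {K : Set E} (hpos : ∀ x ∈ K, 0 < f x) (hzero : ∀ x ∉ K, f x = 0)
    (hint : Integrable f) (hf : ConvexOn ℝ K fun x => f x ^ (-(1 / (k : ℝ)))) {D : ℝ} (hD : 0 ≤ D)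
    (hdiam : ∀ x ∈ K, ∀ y ∈ K, dist x y ≤ D) {S₁ S₂ : Set E} (hS₁ : MeasurableSet S₁)
    (hS₂ : MeasurableSet S₂) {d : ℝ} (hsep : ∀ x ∈ S₁, ∀ y ∈ S₂, d ≤ dist x y) :
    d * min (∫ x in S₁, f x) (∫ x in S₂, f x) ≤ D * ∫ x in (S₁ ∪ S₂)ᶜ, f x := by
  have hnonneg (x) : 0 ≤ f x := by
    by_cases hx : x ∈ K
    exacts [(hpos x hx).le, (hzero x hx).ge]
  have hposint : ∀ x ∈ interior K, 0 < f x := fun x hx => hpos x (interior_subset hx)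
  set g := (interior K).indicator fun x => ENNReal.ofReal (f x) with hg_def
  have hg : HarmonicConcave k g := harmonicConcave_indicator_of_convexOn_rpow hk hposint
    (hf.subset interior_subset hf.1.interior)
  have hmeas : Measurable g := by
    have hcont : ContinuousOn (fun x => ENNReal.ofReal (f x)) (interior K) :=
      ENNReal.continuous_ofReal.comp_continuousOn
        (continuousOn_interior_of_convexOn_rpow (by simpa using hk) hpos hf)
    classical
    rw [hg_def, ← piecewise_eq_indicator]
    exact hcont.measurable_piecewise continuousOn_const isOpen_interior.measurableSet
  have hsupp : support g ⊆ K := support_indicator_subset.trans interior_subset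
  have hdiam' : Metric.ediam (support g) ≤ ENNReal.ofReal D := Metric.ediam_le fun x hx y hy =>
    edist_dist x y ▸ ENNReal.ofReal_le_ofReal (hdiam x (hsupp hx) y (hsupp hy))
  have hlint (S : Set E) : ∫⁻ x in S, g x = ENNReal.ofReal (∫ x in S, f x) := by
    rw [ofReal_integral_eq_lintegral_ofReal hint.integrableOn (.of_forall hnonneg)]
    exact lintegral_congr_ae <| ae_restrict_of_ae <| indicator_interior_ae_eq volume hf.1
      fun x hx => by rw [hzero x hx, ENNReal.ofReal_zero]
  have hfin : ∫⁻ x, g x ≠ ∞ := by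
    rw [← setLIntegral_univ, hlint]
    exact ENNReal.ofReal_ne_top
  have hbdd : Bornology.IsBounded (support g) := Metric.isBounded_iff_ediam_ne_top.2
    (ne_top_of_le_ne_top ENNReal.ofReal_ne_top hdiam')
  have hmain := (hg.ofReal_mul_min_setLIntegral_le hE hmeas hfin hbdd hS₁ hS₂ hsep).trans
    (mul_le_mul_left hdiam' _)
  have hint_nonneg (S : Set E) : 0 ≤ ∫ x in S, f x := integral_nonneg hnonneg
  simpa only [hlint, ← ENNReal.ofReal_min, ← ENNReal.ofReal_mul hD,
    ← ENNReal.ofReal_mul' (le_min (hint_nonneg S₁) (hint_nonneg S₂)),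
    ENNReal.ofReal_le_ofReal_iff (mul_nonneg hD (hint_nonneg _))] using hmain

end Real
end Isoperimetry

theorem isoperimetry_of_harmonic_concave_general {E : Type*} [NormedAddCommGroup E]
    [InnerProductSpace ℝ E] [FiniteDimensional ℝ E] [MeasurableSpace E] [BorelSpace E] {n : ℕ}
    (hn : 2 ≤ n) (hE : Module.finrank ℝ E = n) {f : E → ℝ} {K : Set E}
    (hpos : ∀ x ∈ K, 0 < f x) (hzero : ∀ x ∉ K, f x = 0) (hint : Integrable f)
    (hhc : ConvexOn ℝ K fun x => f x ^ (-(1 / ((n : ℝ) - 1)))) {D : ℝ} (hD : 0 < D)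
    (hdiam : ∀ x ∈ K, ∀ y ∈ K, dist x y ≤ D) {S₁ S₂ : Set E} (hm₁ : MeasurableSet S₁)
    (hm₂ : MeasurableSet S₂) {d : ℝ} (hsep : ∀ x ∈ S₁, ∀ y ∈ S₂, d ≤ dist x y) :
    d / D * min ((∫ x in S₁, f x) / ∫ x, f x) ((∫ x in S₂, f x) / ∫ x, f x) ≤
      (∫ x in (S₁ ∪ S₂)ᶜ, f x) / ∫ x, f x := by
  obtain ⟨k, rfl⟩ := Nat.exists_eq_add_of_le' (one_le_two.trans hn)
  rw [Nat.cast_add_one, add_sub_cancel_right] at hhc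
  have htotal : 0 ≤ ∫ x, f x := integral_nonneg fun x => by
    by_cases hx : x ∈ K
    exacts [(hpos x hx).le, (hzero x hx).ge]
  rw [min_div_div_right htotal, ← mul_div_assoc, div_mul_eq_mul_div]
  gcongr
  rw [div_le_iff₀' hD]
  exact mul_min_setIntegral_le_of_convexOn_rpow (by lia) hE hpos hzero hint hhc hD.le hdiam hm₁ hm₂
    hsep

theorem isoperimetry_of_harmonic_concave {n : ℕ} (hn : 2 ≤ n)
    (f : EuclideanSpace ℝ (Fin n) → ℝ) (K : Set (EuclideanSpace ℝ (Fin n)))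
    (hK : Convex ℝ K) (hpos : ∀ x ∈ K, 0 < f x) (hzero : ∀ x ∉ K, f x = 0)
    (hint : Integrable f)
    (hhc : ConvexOn ℝ K (fun x => f x ^ (-(1 / ((n:ℝ) - 1)))))
    (D : ℝ) (hD : 0 < D) (hdiam : ∀ x ∈ K, ∀ y ∈ K, dist x y ≤ D)
    (S₁ S₂ S₃ : Set (EuclideanSpace ℝ (Fin n)))
    (hm₁ : MeasurableSet S₁) (hm₂ : MeasurableSet S₂) (hm₃ : MeasurableSet S₃)
    (hcover : S₁ ∪ S₂ ∪ S₃ = univ)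
    (hd₁₂ : Disjoint S₁ S₂) (hd₁₃ : Disjoint S₁ S₃) (hd₂₃ : Disjoint S₂ S₃)
    (dd : ℝ) (hdd : 0 ≤ dd) (hsep : ∀ u ∈ S₁, ∀ v ∈ S₂, dd ≤ dist u v) :
    (dd / D) * min ((∫ x in S₁, f x) / ∫ x, f x) ((∫ x in S₂, f x) / ∫ x, f x) ≤
      (∫ x in S₃, f x) / ∫ x, f x := by
  obtain rfl : S₃ = (S₁ ∪ S₂)ᶜ :=
    (IsCompl.of_eq (disjoint_union_left.2 ⟨hd₁₃, hd₂₃⟩).inter_eq hcover).symm.eq_compl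
  exact isoperimetry_of_harmonic_concave_general hn (by simp) hpos hzero hint hhc hD hdiam hm₁ hm₂
    hsep
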